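/- (Theorem 1 in flat-boundary coordinates.) Let φ̂ be an idealized one-dimensional diffuse-interface profile and φ^ε(s) := φ̂(s/ε) its rescaling. Let A ⊆ ℝ^d be a measurable set of finite Lebesgue measure, and let f, g : A × ℝ → ℝ be measurable with |f| ≤ M and |g| ≤ M everywhere, and such that for each y ∈ A the function s ↦ g(y, s) is L-Lipschitz with L independent of y. Then lim_{ε→0⁺} ∫_A ∫_{-ε/2}^{ε/2} ( f(y,s) φ^ε(s) + g(y,s) |(φ^ε)'(s)| ) ds dy = ∫_A g(y, 0) dy. -/

import Mathlib

open MeasureTheory Filter Set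

theorem inner_bound (ψ : ℝ → ℝ) (K : NNReal) (hlip : LipschitzWith K ψ) (hmono : Monotone ψ)
    (ε : ℝ) (hε : 0 < ε) (h0 : ψ (-(ε/2)) = 0) (h1 : ψ (ε/2) = 1)
    (f g : ℝ → ℝ) (hfm : Measurable f) (hgm : Measurable g) (M : ℝ)
    (hf : ∀ s, |f s| ≤ M) (hg : ∀ s, |g s| ≤ M) (L : NNReal) (hgL : LipschitzWith L g) :
    |(∫ s in (-(ε/2))..(ε/2), (f s * ψ s + g s * |deriv ψ s|)) - g 0| ≤ (M + L) * ε := by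
  have hle : -(ε/2) ≤ ε/2 := by linarith
  have hac : AbsolutelyContinuousOnInterval ψ (-(ε/2)) (ε/2) :=
    (hlip.lipschitzOnWith (s := _)).absolutelyContinuousOnInterval
  have hint : ∫ s in (-(ε/2))..(ε/2), deriv ψ s = 1 := by
    rw [hac.integral_deriv_eq_sub, h0, h1]; norm_num
  have hii := hac.intervalIntegrable_deriv
  have hnn : ∀ s, 0 ≤ deriv ψ s := fun s => hmono.deriv_nonneg
  simp_rw [fun s => abs_of_nonneg (hnn s)]
  have hdm : Measurable (deriv ψ) := measurable_deriv ψ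
  have hM : 0 ≤ M := (abs_nonneg _).trans (hf 0)
  have hψ : ∀ s ∈ Ioc (-(ε/2)) (ε/2), |ψ s| ≤ 1 := by
    intro s hs
    have a := hmono hs.1.le
    have b := hmono hs.2
    rw [abs_le]; constructor <;> linarith
  have hgi : IntervalIntegrable (fun s => g s * deriv ψ s) volume (-(ε/2)) (ε/2) := by
    refine (hii.const_mul M).mono_fun' (hgm.mul hdm).aestronglyMeasurable ?_
    refine Eventually.of_forall fun s => ?_
    simp only [Real.norm_eq_abs, abs_mul, abs_of_nonneg (hnn s)]
    exact mul_le_mul_of_nonneg_right (hg s) (hnn s)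
  have hfi : IntervalIntegrable (fun s => f s * ψ s) volume (-(ε/2)) (ε/2) := by
    refine (intervalIntegrable_const (c := M)).mono_fun'
      (hfm.mul hlip.continuous.measurable).aestronglyMeasurable ?_
    rw [uIoc_of_le hle]
    refine (ae_restrict_iff' measurableSet_Ioc).2 (Eventually.of_forall fun s hs => ?_)
    simp only [Real.norm_eq_abs, abs_mul]
    nlinarith [hf s, hψ s hs, abs_nonneg (f s), abs_nonneg (ψ s)]
  have e : (∫ s in (-(ε/2))..(ε/2), (f s * ψ s + g s * deriv ψ s)) - g 0
      = ∫ s in (-(ε/2))..(ε/2), ((f s * ψ s + g s * deriv ψ s) - g 0 * deriv ψ s) := by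
    rw [intervalIntegral.integral_sub (hfi.add hgi) (hii.const_mul _),
      intervalIntegral.integral_const_mul, hint, mul_one]
  have e2 : (∫ s in (-(ε/2))..(ε/2), (M + (L * ε) * deriv ψ s)) = (M + L) * ε := by
    rw [intervalIntegral.integral_add intervalIntegrable_const (hii.const_mul _),
      intervalIntegral.integral_const_mul, hint, intervalIntegral.integral_const, smul_eq_mul]
    ring
  rw [e, ← e2, ← Real.norm_eq_abs]
  refine intervalIntegral.norm_integral_le_of_norm_le hle
    (Eventually.of_forall fun s hs => ?_) (intervalIntegrable_const.add (hii.const_mul _))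
  have hgs : |g s - g 0| ≤ L * ε := by
    have := hgL.dist_le_mul s 0
    rw [Real.dist_eq, Real.dist_eq, sub_zero] at this
    refine this.trans (mul_le_mul_of_nonneg_left ?_ L.2)
    rw [abs_le]; constructor <;> linarith [hs.1, hs.2]
  have : f s * ψ s + g s * deriv ψ s - g 0 * deriv ψ s
      = f s * ψ s + (g s - g 0) * deriv ψ s := by ring
  rw [this, Real.norm_eq_abs]
  refine (abs_add_le _ _).trans (add_le_add ?_ ?_)
  · rw [abs_mul]
    nlinarith [hf s, hψ s hs, abs_nonneg (f s), abs_nonneg (ψ s)]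
  · rw [abs_mul, abs_of_nonneg (hnn s)]
    exact mul_le_mul_of_nonneg_right hgs (hnn s)



/-- Theorem 1 in flat-boundary coordinates: For an idealized 1D
diffuse-interface profile `φhat` with rescaling `φ^ε (s) = φhat (s/ε)`, a measurable set
`A ⊆ ℝ^d` of finite Lebesgue measure, and measurable `f, g : A × ℝ → ℝ` with `|f| ≤ M`,
`|g| ≤ M`, and `s ↦ g (y, s)` uniformly `L`-Lipschitz for `y ∈ A`, we have
`∫_A ∫_{-ε/2}^{ε/2} (f φ^ε + g |(φ^ε)'|) ds dy → ∫_A g(y,0) dy` as `ε → 0⁺`. -/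
theorem stmt4 (d : ℕ) (φhat : ℝ → ℝ) (K : NNReal)
    (hlip : LipschitzWith K φhat) (hmono : Monotone φhat)
    (hzero : ∀ s : ℝ, s ≤ -(1/2) → φhat s = 0)
    (hone : ∀ s : ℝ, (1/2 : ℝ) ≤ s → φhat s = 1)
    (A : Set (EuclideanSpace ℝ (Fin d))) (hA : MeasurableSet A) (hAfin : volume A < ⊤)
    (f g : EuclideanSpace ℝ (Fin d) → ℝ → ℝ)
    (hfm : Measurable (Function.uncurry f)) (hgm : Measurable (Function.uncurry g))
    (M : ℝ) (hfb : ∀ y s, |f y s| ≤ M) (hgb : ∀ y s, |g y s| ≤ M)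
    (L : NNReal) (hgL : ∀ y ∈ A, LipschitzWith L (g y)) :
    Tendsto (fun ε : ℝ => ∫ y in A, ∫ s in (-(ε/2))..(ε/2),
        (f y s * φhat (s/ε) + g y s * |deriv (fun t => φhat (t/ε)) s|))
      (nhdsWithin 0 (Ioi 0)) (nhds (∫ y in A, g y 0)) := by
  have key : ∀ ε : ℝ, 0 < ε → ∀ y ∈ A, |(∫ s in (-(ε/2))..(ε/2),
        (f y s * φhat (s/ε) + g y s * |deriv (fun t => φhat (t/ε)) s|)) - g y 0|
        ≤ (M + L) * ε := by
    intro ε hε y hy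
    have hl : LipschitzWith (K * ‖ε⁻¹‖₊) (fun t => φhat (t/ε)) := by
      refine hlip.comp (LipschitzWith.of_dist_le_mul fun a b => ?_)
      rw [Real.dist_eq, Real.dist_eq, ← sub_div, abs_div, coe_nnnorm, Real.norm_eq_abs, abs_inv,
        div_eq_inv_mul]
    refine inner_bound (fun t => φhat (t/ε)) _ hl
      (fun a b hab => hmono (div_le_div_of_nonneg_right hab hε.le)) ε hε ?_ ?_ (f y) (g y)
      (hfm.comp measurable_prodMk_left) (hgm.comp measurable_prodMk_left) M (hfb y) (hgb y)
      L (hgL y hy)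
    · exact hzero _ (le_of_eq (by field_simp))
    · exact hone _ (le_of_eq (by field_simp))
  have : IsFiniteMeasure (volume.restrict A) := ⟨by simpa using hAfin⟩
  have hpos : ∀ᶠ ε : ℝ in nhdsWithin 0 (Ioi 0), 0 < ε := self_mem_nhdsWithin
  have hlt : ∀ᶠ ε : ℝ in nhdsWithin 0 (Ioi 0), ε < 1 :=
    mem_nhdsWithin_of_mem_nhds (Iio_mem_nhds one_pos)
  refine tendsto_integral_filter_of_dominated_convergence (fun _ => M + (|M| + L)) ?_ ?_
    (integrable_const _) ?_
  · filter_upwards [hpos] with ε hε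
    simp_rw [intervalIntegral.integral_of_le (show -(ε/2) ≤ ε/2 by linarith)]
    have hm : Measurable (fun p : EuclideanSpace ℝ (Fin d) × ℝ =>
        f p.1 p.2 * φhat (p.2/ε) + g p.1 p.2 * |deriv (fun t => φhat (t/ε)) p.2|) := by
      refine (hfm.mul (hlip.continuous.measurable.comp (measurable_snd.div_const ε))).add
        (hgm.mul ?_)
      have := (measurable_deriv (fun t => φhat (t/ε))).abs
      exact this.comp measurable_snd
    exact (hm.stronglyMeasurable.integral_prod_right').aestronglyMeasurable
  · filter_upwards [hpos, hlt] with ε hε h1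
    refine (ae_restrict_iff' hA).2 (Eventually.of_forall fun y hy => ?_)
    have a := key ε hε y hy
    have b := hgb y 0
    rw [Real.norm_eq_abs]
    have c := abs_sub_abs_le_abs_sub (∫ s in (-(ε/2))..(ε/2),
        (f y s * φhat (s/ε) + g y s * |deriv (fun t => φhat (t/ε)) s|)) (g y 0)
    have hM : 0 ≤ M := (abs_nonneg _).trans b
    rw [abs_of_nonneg hM]
    have hL : (0:ℝ) ≤ L := L.2
    nlinarith
  · refine (ae_restrict_iff' hA).2 (Eventually.of_forall fun y hy => ?_)
    rw [tendsto_iff_dist_tendsto_zero]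
    have hz : Tendsto (fun ε : ℝ => (M + L) * ε) (nhdsWithin 0 (Ioi 0)) (nhds 0) := by
      have : Tendsto (fun ε : ℝ => (M + L) * ε) (nhds 0) (nhds ((M + L) * 0)) :=
        (continuous_const.mul continuous_id).tendsto 0
      rw [mul_zero] at this
      exact this.mono_left nhdsWithin_le_nhds
    refine squeeze_zero' (Eventually.of_forall fun _ => dist_nonneg) ?_ hz
    filter_upwards [hpos] with ε hε
    rw [Real.dist_eq]
    exact key ε hε y hy
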